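/- arXiv:1911.00785 — 5 statements merged into one kernel-verified Lean document; each statement's English description precedes it below -/
import Mathlib

section
/- Suppose G ↷ X has the uniform topological Markov property. Let k ∈ ℕ and (x₁,…,x_k,x_{k+1}) ∈ X^{k+1} be such that (x_k,x_{k+1}) is an asymptotic pair. Then (x₁,…,x_k) is an orbit IE-tuple if and only if (x₁,…,x_k,x_{k+1}) is an orbit IE-tuple. -/
open Pointwise

/-- Supremum over `g ∈ K` of `ρ (g • x) (g • y)`. -/
noncomputable def supOf {G X : Type*} [SMul G X] (ρ : X → X → ℝ) (K : Set G) (x y : X) : ℝ :=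
  ⨆ g : K, ρ ((g : G) • x) ((g : G) • y)

/-- `d_K(x,y) = sup_{g ∈ K} d(g x, g y)`. -/
noncomputable def supD {G X : Type*} [SMul G X] [PseudoMetricSpace X] (K : Set G) (x y : X) : ℝ :=
  supOf dist K x y

/-- `B` is an `(ε,δ)`-memory set for `A`. -/
def IsMemorySet (G X : Type*) [SMul G X] [PseudoMetricSpace X] (ε δ : ℝ)
    (A B : Finset G) : Prop :=
  (A : Set G) ⊆ (B : Set G) ∧
    ∀ x y : X, supD ((B : Set G) \ (A : Set G)) x y ≤ δ →
      ∃ z : X, supD (B : Set G) x z ≤ ε ∧ supD (Set.univ \ (A : Set G)) y z ≤ ε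

/-- The topological Markov property. -/
def TMP (G X : Type*) [SMul G X] [PseudoMetricSpace X] : Prop :=
  ∀ ε > (0 : ℝ), ∃ δ > (0 : ℝ), ∀ A : Finset G, ∃ B : Finset G, IsMemorySet G X ε δ A B

/-- The strong topological Markov property. -/
def StrongTMP (G X : Type*) [Group G] [DecidableEq G] [MulAction G X]
    [PseudoMetricSpace X] : Prop :=
  ∀ ε > (0 : ℝ), ∃ δ > (0 : ℝ), ∃ F : Finset G, (1 : G) ∈ F ∧
    ∀ A : Finset G, IsMemorySet G X ε δ A (F * A)

/-- `V` is `B`-separated. -/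
def Separated {G : Type*} [Mul G] (B V : Set G) : Prop :=
  ∀ v₁ ∈ V, ∀ v₂ ∈ V, v₁ ≠ v₂ → Disjoint (B * ({v₁} : Set G)) (B * ({v₂} : Set G))

/-- `B` is a uniform `(ε,δ)`-memory set for `A`. -/
def IsUniformMemorySet (G X : Type*) [Group G] [MulAction G X] [PseudoMetricSpace X]
    (ε δ : ℝ) (A B : Finset G) : Prop :=
  IsMemorySet G X ε δ A B ∧
    ∀ V : Finset G, Separated (B : Set G) (V : Set G) →
      ∀ (xv : G → X) (y : X),
        (∀ v ∈ V, supD (((B : Set G) \ (A : Set G)) * ({v} : Set G)) (xv v) y ≤ δ) →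
        ∃ z : X, (∀ v ∈ V, supD ((B : Set G) * ({v} : Set G)) z (xv v) ≤ ε) ∧
          supD (Set.univ \ ((A : Set G) * (V : Set G))) z y ≤ ε

/-- The uniform topological Markov property. -/
def UniformTMP (G X : Type*) [Group G] [MulAction G X] [PseudoMetricSpace X] : Prop :=
  ∀ ε > (0 : ℝ), ∃ δ > (0 : ℝ), ∀ A : Finset G, ∃ B : Finset G,
    IsUniformMemorySet G X ε δ A B

/-- The uniform strong topological Markov property. -/
def UniformStrongTMP (G X : Type*) [Group G] [DecidableEq G] [MulAction G X]
    [PseudoMetricSpace X] : Prop :=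
  ∀ ε > (0 : ℝ), ∃ δ > (0 : ℝ), ∃ F : Finset G, (1 : G) ∈ F ∧
    ∀ A : Finset G, IsUniformMemorySet G X ε δ A (F * A)

/-- Expansivity of the action. -/
def Expansive (G X : Type*) [SMul G X] [PseudoMetricSpace X] : Prop :=
  ∃ c > (0 : ℝ), ∀ x y : X, x ≠ y → ∃ g : G, dist (g • x) (g • y) > c

/-- `(x,y)` is an asymptotic pair. -/
def Asymptotic (G : Type*) {X : Type*} [SMul G X] [PseudoMetricSpace X] (x y : X) : Prop :=
  ∀ ε > (0 : ℝ), ∃ F : Finset G, ∀ g ∉ F, dist (g • x) (g • y) ≤ ε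

/-- `(S,δ)` pseudo-orbit. -/
def IsPseudoOrbit {G X : Type*} [Mul G] [SMul G X] [PseudoMetricSpace X]
    (S : Finset G) (δ : ℝ) (w : G → X) : Prop :=
  ∀ s ∈ S, ∀ g : G, dist (s • w g) (w (s * g)) < δ

/-- `w` is `ε`-traced by `x`. -/
def Traces {G X : Type*} [SMul G X] [PseudoMetricSpace X] (ε : ℝ) (x : X) (w : G → X) : Prop :=
  ∀ g : G, dist (g • x) (w g) ≤ ε

/-- Pseudo-orbit tracing property. -/
def POTP (G X : Type*) [Mul G] [SMul G X] [PseudoMetricSpace X] : Prop :=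
  ∀ ε > (0 : ℝ), ∃ δ > (0 : ℝ), ∃ S : Finset G, ∀ w : G → X,
    IsPseudoOrbit S δ w → ∃ x : X, Traces ε x w

/-- `J` is an independence set for the tuple `U`. -/
def IndepSet {G X : Type*} [SMul G X] {n : ℕ} (U : Fin n → Set X) (J : Set G) : Prop :=
  ∀ I : Finset G, (I : Set G) ⊆ J → I.Nonempty → ∀ φ : G → Fin n,
    (⋂ s ∈ I, (fun x : X => s • x) ⁻¹' U (φ s)).Nonempty

/-- The tuple `U` has positive independence density. -/
def PosIndepDensity (G : Type*) {X : Type*} [SMul G X] {n : ℕ} (U : Fin n → Set X) : Prop :=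
  ∃ q > (0 : ℝ), ∀ F : Finset G, ∃ J : Finset G, J ⊆ F ∧
    q * (F.card : ℝ) ≤ (J.card : ℝ) ∧ IndepSet U (J : Set G)

/-- Orbit IE-tuple. -/
def IETuple (G : Type*) {X : Type*} [SMul G X] [TopologicalSpace X] {n : ℕ}
    (x : Fin n → X) : Prop :=
  ∀ U : Fin n → Set X, (∀ i, IsOpen (U i)) → (∀ i, x i ∈ U i) → PosIndepDensity G U

/-- Minimality of the action. -/
def MinimalAction (G X : Type*) [SMul G X] [TopologicalSpace X] : Prop :=
  ∀ Y : Set X, IsClosed Y → (∀ g : G, ∀ y ∈ Y, g • y ∈ Y) → Y.Nonempty → Y = Set.univ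

/-- Følner sequence. -/
def FolnerSeq (G : Type*) [Group G] [DecidableEq G] (F : ℕ → Finset G) : Prop :=
  (∀ n, (F n).Nonempty) ∧
    ∀ K : Finset G, Filter.Tendsto
      (fun n => ((symmDiff (K * F n) (F n)).card : ℝ) / ((F n).card : ℝ))
      Filter.atTop (nhds 0)

theorem supD_le_of {G X : Type*} [SMul G X] [PseudoMetricSpace X] {K : Set G} {x y : X} {δ : ℝ}
    (hδ : 0 ≤ δ) (h : ∀ g ∈ K, dist (g • x) (g • y) ≤ δ) : supD K x y ≤ δ :=
  Real.iSup_le (fun g => h g.1 g.2) hδ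

theorem dist_le_of_supD {G X : Type*} [SMul G X] [MetricSpace X] [CompactSpace X]
    {K : Set G} {x y : X} {δ : ℝ} (h : supD K x y ≤ δ) {g : G} (hg : g ∈ K) :
    dist (g • x) (g • y) ≤ δ := by
  refine le_trans ?_ h
  refine le_ciSup (f := fun g : K => dist ((g : G) • x) ((g : G) • y)) ?_ ⟨g, hg⟩
  refine ⟨Metric.diam (Set.univ : Set X), ?_⟩
  rintro _ ⟨a, rfl⟩
  exact Metric.dist_le_diam_of_mem isCompact_univ.isBounded (Set.mem_univ _) (Set.mem_univ _)

theorem exists_separated {G : Type*} [Group G] (B : Finset G) (hB : (1 : G) ∈ B) :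
    ∃ c : ℝ, 0 < c ∧ ∀ J : Finset G, ∃ S : Finset G, S ⊆ J ∧
      Separated (B : Set G) (S : Set G) ∧ (J.card : ℝ) ≤ c * S.card := by
  classical
  have h1 : (1 : G) ∈ B⁻¹ * B :=
    Finset.mem_mul.2 ⟨1, by simpa using hB, 1, hB, by simp⟩
  refine ⟨((B⁻¹ * B).card : ℝ), by exact_mod_cast Finset.card_pos.2 ⟨1, h1⟩, fun J => ?_⟩
  obtain ⟨S, hS⟩ := (J.powerset.filter
    (fun S : Finset G => Separated (B : Set G) (S : Set G))).exists_maximal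
    ⟨∅, by simp [Separated]⟩
  have hSm := hS.prop
  rw [Finset.mem_filter, Finset.mem_powerset] at hSm
  refine ⟨S, hSm.1, hSm.2, ?_⟩
  have hsub : J ⊆ (B⁻¹ * B) * S := by
    intro j hj
    by_contra hn
    have key : ∀ s ∈ S, Disjoint ((B : Set G) * ({j} : Set G)) ((B : Set G) * ({s} : Set G)) := by
      intro s hs
      rw [Set.disjoint_left]
      rintro a ha ha'
      rw [Set.mul_singleton] at ha ha'
      obtain ⟨b, hb, rfl⟩ := ha
      obtain ⟨b', hb', hbb⟩ := ha'
      apply hn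
      refine Finset.mem_mul.2 ⟨b⁻¹ * b', Finset.mem_mul.2 ⟨b⁻¹, by simpa using hb, b', hb', rfl⟩,
        s, hs, ?_⟩
      simp only at hbb
      rw [mul_assoc, hbb]; simp
    have hjS : j ∈ S := by
      refine hS.le_of_ge (y := insert j S) ?_ (Finset.subset_insert _ _)
        (Finset.mem_insert_self _ _)
      rw [Finset.mem_filter, Finset.mem_powerset]
      refine ⟨Finset.insert_subset hj hSm.1, ?_⟩
      intro v hv w hw hvw
      simp only [Finset.coe_insert, Set.mem_insert_iff, Finset.mem_coe] at hv hw
      rcases hv with rfl | hv <;> rcases hw with rfl | hw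
      · exact absurd rfl hvw
      · exact key w hw
      · exact (key v hv).symm
      · exact hSm.2 v hv w hw hvw
    exact hn (Finset.mem_mul.2 ⟨1, h1, j, hjS, by simp⟩)
  calc (J.card : ℝ) ≤ (((B⁻¹ * B) * S).card : ℝ) := by exact_mod_cast Finset.card_le_card hsub
    _ ≤ _ := by exact_mod_cast Finset.card_mul_le

/-- Suppose `G ↷ X` has the uniform TMP.  If `(x_k, y)` is an asymptotic
pair, then `(x₁,…,x_k)` is an orbit IE-tuple iff `(x₁,…,x_k,y)` is an orbit IE-tuple. -/
theorem stmt11 (G X : Type*) [Group G] [Countable G] [Infinite G]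
    [MetricSpace X] [CompactSpace X] [MulAction G X]
    (hcont : ∀ g : G, Continuous fun x : X => g • x)
    (hutmp : UniformTMP G X)
    (n : ℕ) (x : Fin (n + 1) → X) (y : X)
    (hasym : Asymptotic G (x (Fin.last n)) y) :
    IETuple G x ↔ IETuple G (Fin.snoc x y) := by
  classical
  constructor
  · intro hx U hUo hxU
    -- a uniform radius
    have hball : ∀ i : Fin (n + 1 + 1), ∃ r > (0 : ℝ),
        Metric.ball ((Fin.snoc x y : Fin (n + 1 + 1) → X) i) r ⊆ U i := fun i =>
      Metric.isOpen_iff.1 (hUo i) _ (hxU i)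
    choose r hr hrU using hball
    obtain ⟨ε, hε, hεr⟩ : ∃ ε > (0 : ℝ), ∀ i, ε ≤ r i :=
      ⟨Finset.univ.inf' Finset.univ_nonempty r, by simpa using hr,
        fun i => Finset.inf'_le _ (Finset.mem_univ i)⟩
    obtain ⟨δ, hδ, hmem⟩ := hutmp (ε / 2) (by positivity)
    obtain ⟨F, hF⟩ := hasym (δ / 2) (by positivity)
    obtain ⟨B, ⟨hAB, -⟩, hB⟩ := hmem (insert 1 F)
    have h1B : (1 : G) ∈ B := by
      have : (1 : G) ∈ (B : Set G) := hAB (by simp)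
      simpa using this
    let W : Fin (n + 1) → Set X := fun i =>
      Metric.ball (x i) (ε / 2) ∩ ⋂ g ∈ B, (fun p : X => g • p) ⁻¹' Metric.ball (g • x i) (δ / 2)
    have hWo : ∀ i, IsOpen (W i) := fun i =>
      Metric.isOpen_ball.inter (isOpen_biInter_finset fun g _ =>
        Metric.isOpen_ball.preimage (hcont g))
    have hxW : ∀ i, x i ∈ W i := fun i => by
      refine ⟨Metric.mem_ball_self (by positivity), ?_⟩
      simp only [Set.mem_iInter]
      intro g _
      exact Metric.mem_ball_self (by positivity)
    obtain ⟨q, hq, hqJ⟩ := hx W hWo hxW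
    obtain ⟨c, hc, hsep⟩ := exists_separated B h1B
    refine ⟨q / c, by positivity, fun E => ?_⟩
    obtain ⟨J, hJE, hJc, hJ⟩ := hqJ E
    obtain ⟨S, hSJ, hSs, hSc⟩ := hsep J
    refine ⟨S, hSJ.trans hJE, ?_, ?_⟩
    · rw [div_mul_eq_mul_div, div_le_iff₀ hc]
      linarith
    intro I hI hIne φ
    have hIJ : (I : Set G) ⊆ (J : Set G) := fun s hs => hSJ (by simpa using hI hs)
    let ψ : G → Fin (n + 1) := fun s => Fin.lastCases (motive := fun _ => Fin (n + 1))
      (Fin.last n) (fun i => i) (φ s)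
    obtain ⟨w, hw⟩ := hJ I hIJ hIne ψ
    simp only [Set.mem_iInter, Set.mem_preimage] at hw
    let V : Finset G := I.filter fun s => φ s = Fin.last (n + 1)
    have hVI : ∀ v ∈ V, v ∈ I ∧ φ v = Fin.last (n + 1) := fun v hv => Finset.mem_filter.1 hv
    have hVsep : Separated (B : Set G) (V : Set G) := fun v hv v' hv' =>
      hSs v (hI (hVI v hv).1) v' (hI (hVI v' hv').1)
    obtain ⟨z, hz1, hz2⟩ := hB V hVsep (fun v => v⁻¹ • y) w (by
      intro v hv
      apply supD_le_of hδ.le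
      intro g hg
      rw [Set.mul_singleton] at hg
      obtain ⟨b, ⟨hbB, hbA⟩, rfl⟩ := hg
      have hψ : ψ v = Fin.last n := by simp [ψ, (hVI v hv).2]
      have h2 := hw v (hVI v hv).1
      rw [hψ] at h2
      have h3 := h2.2
      simp only [Set.mem_iInter, Set.mem_preimage, Metric.mem_ball] at h3
      have h4 := h3 b hbB
      have h5 : dist (b • x (Fin.last n)) (b • y) ≤ δ / 2 := hF b fun hb => hbA (by simp [hb])
      have h6 := dist_triangle_left (b • y) (b • v • w) (b • x (Fin.last n))
      rw [dist_comm] at h4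
      simp only [mul_smul, smul_inv_smul]
      linarith)
    refine ⟨z, ?_⟩
    simp only [Set.mem_iInter, Set.mem_preimage]
    intro s hs
    apply hrU
    refine Metric.ball_subset_ball (hεr _) ?_
    rw [Metric.mem_ball]
    by_cases hφ : φ s = Fin.last (n + 1)
    · have hsV : s ∈ V := Finset.mem_filter.2 ⟨hs, hφ⟩
      have h := dist_le_of_supD (hz1 s hsV) (g := s)
        (by rw [Set.mul_singleton]; exact ⟨1, h1B, by simp⟩)
      rw [smul_inv_smul] at h
      rw [hφ, Fin.snoc_last]
      linarith
    · obtain ⟨i, hi⟩ := Fin.exists_castSucc_eq.2 hφ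
      have hψ : ψ s = i := by simp [ψ, ← hi]
      have h2 := (hw s hs).1
      rw [hψ, Metric.mem_ball] at h2
      have h3 := dist_le_of_supD hz2 (g := s) (by
        refine ⟨Set.mem_univ _, ?_⟩
        rintro ⟨a, ha, v, hv, hav⟩
        have hne : s ≠ v := fun h => hφ (h ▸ (hVI v hv).2)
        refine Set.disjoint_left.1 (hSs s (hI hs) v (hI (hVI v hv).1) hne) (?_ : s ∈ _) ?_
        · rw [Set.mul_singleton]; exact ⟨1, h1B, by simp⟩
        · rw [Set.mul_singleton]; exact ⟨a, hAB ha, hav⟩)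
      rw [← hi, Fin.snoc_castSucc]
      have := dist_triangle (s • z) (s • w) (x i)
      linarith
  · intro hx U hUo hxU
    obtain ⟨q, hq, h⟩ := hx (Fin.snoc (α := fun _ => Set X) U Set.univ)
      (fun i => by
        refine Fin.lastCases ?_ (fun j => ?_) i
        · simp
        · simpa using hUo j)
      (fun i => by
        refine Fin.lastCases ?_ (fun j => ?_) i
        · simp
        · simpa using hxU j)
    refine ⟨q, hq, fun E => ?_⟩
    obtain ⟨J, hJE, hJc, hJ⟩ := h E
    refine ⟨J, hJE, hJc, fun I hI hne φ => ?_⟩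
    simpa using hJ I hI hne (fun s => (φ s).castSucc)
end

section
/- Let G ↷ X be an action with the mean topological Markov property. Then for every k ≥ 2 and every ε > 0, every orbit IE-tuple of length k lies in the closure of the set A_k^ε(X,G) of ε-asymptotic k-tuples. -/
open Pointwise

/-- The mean topological Markov property. -/
def MeanTMP (G X : Type*) [Group G] [DecidableEq G] [MulAction G X]
    [PseudoMetricSpace X] : Prop :=
  ∀ ε > (0 : ℝ), ∃ δ > (0 : ℝ), ∃ Fs : ℕ → Finset G,
    Monotone Fs ∧ (⋃ n, (Fs n : Set G)) = Set.univ ∧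
    ∃ Bs : ℕ → Finset G, (∀ n, IsMemorySet G X ε δ (Fs n) (Bs n)) ∧
      Filter.Tendsto (fun n => (((Bs n \ Fs n).card : ℝ) / ((Fs n).card : ℝ)))
        Filter.atTop (nhds 0)

/-- `(x₁,…,x_k)` is an `ε`-asymptotic tuple. -/
def EpsAsymTuple (G : Type*) {X : Type*} [SMul G X] [PseudoMetricSpace X] {k : ℕ}
    (ε : ℝ) (x : Fin k → X) : Prop :=
  ∃ F : Finset G, ∀ g ∉ F, ∀ i j : Fin k, dist (g • x i) (g • x j) ≤ ε

lemma le_supD_aux {G X : Type*} [SMul G X] [MetricSpace X] [CompactSpace X]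
    (K : Set G) (x y : X) (r : ℝ) (h : supD K x y ≤ r) (g : G) (hg : g ∈ K) :
    dist (g • x) (g • y) ≤ r := by
  refine le_trans ?_ h
  unfold supD supOf
  refine le_ciSup (f := fun g : K => dist ((g : G) • x) ((g : G) • y)) ?_ ⟨g, hg⟩
  refine ⟨Metric.diam (Set.univ : Set X), ?_⟩
  rintro _ ⟨a, rfl⟩
  exact Metric.dist_le_diam_of_mem isCompact_univ.isBounded (Set.mem_univ _) (Set.mem_univ _)

lemma supD_le_aux {G X : Type*} [SMul G X] [MetricSpace X]
    (K : Set G) (x y : X) (r : ℝ) (hr : 0 ≤ r)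
    (h : ∀ g ∈ K, dist (g • x) (g • y) ≤ r) : supD K x y ≤ r := by
  unfold supD supOf
  exact Real.iSup_le (fun g => h g g.2) hr

lemma shatter_aux {J : Type*} [Fintype J] [DecidableEq J] {k : ℕ}
    (S : Finset (J → Fin k)) (h : (k - 1) ^ Fintype.card J < S.card) :
    ∃ s : J, ∀ i : Fin k, ∃ φ ∈ S, φ s = i := by
  by_contra! hc
  choose i hi using hc
  have hsub : S ⊆ Fintype.piFinset (fun s => Finset.univ.erase (i s)) := by
    intro φ hφ
    rw [Fintype.mem_piFinset]
    intro s
    exact Finset.mem_erase.2 ⟨hi s φ hφ, Finset.mem_univ _⟩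
  have := Finset.card_le_card hsub
  rw [Fintype.card_piFinset] at this
  simp [Finset.card_erase_of_mem] at this
  omega

lemma count_aux (k M j b : ℕ) (f q : ℝ) (hk : 2 ≤ k) (hM : 1 ≤ M) (hf : 0 < f)
    (hj : q * f ≤ j)
    (hb : (b : ℝ) / f < q * (Real.log k - Real.log (k - 1 : ℕ)) / (Real.log M + 1)) :
    M ^ b * (k - 1) ^ j < k ^ j := by
  have hk1 : (0 : ℝ) < ((k - 1 : ℕ) : ℝ) := by exact_mod_cast (by omega : 0 < k - 1)
  have hk0 : (0 : ℝ) < (k : ℝ) := by exact_mod_cast (by omega : 0 < k)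
  have hM0 : (0 : ℝ) < (M : ℝ) := by exact_mod_cast hM
  have hL : 0 < Real.log k - Real.log (k - 1 : ℕ) := by
    have := Real.log_lt_log hk1 (by exact_mod_cast (by omega : k - 1 < k) : ((k - 1 : ℕ) : ℝ) < k)
    linarith
  have hlM : 0 ≤ Real.log M := Real.log_natCast_nonneg M
  rw [div_lt_div_iff₀ hf (by linarith)] at hb
  have h1 : (b : ℝ) * Real.log M + j * Real.log (k - 1 : ℕ) < j * Real.log k := by
    have h2 := mul_le_mul_of_nonneg_right hj hL.le
    have h3 : (0 : ℝ) ≤ b := Nat.cast_nonneg b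
    nlinarith
  have : ((M : ℝ) ^ b * ((k - 1 : ℕ) : ℝ) ^ j) < (k : ℝ) ^ j := by
    rw [← Real.log_lt_log_iff (by positivity) (by positivity),
      Real.log_mul (by positivity) (by positivity), Real.log_pow, Real.log_pow, Real.log_pow]
    exact h1
  exact_mod_cast this

/-- Let `G ↷ X` be an action with the mean TMP.  Then for every `k ≥ 2` and
every `ε > 0`, every orbit IE-tuple of length `k` lies in the closure of the set of
`ε`-asymptotic `k`-tuples. -/
theorem stmt12 (G X : Type*) [Group G] [Countable G] [Infinite G] [DecidableEq G]
    [MetricSpace X] [CompactSpace X] [MulAction G X]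
    (hcont : ∀ g : G, Continuous fun x : X => g • x)
    (hmtmp : MeanTMP G X) :
    ∀ k : ℕ, 2 ≤ k → ∀ ε > (0 : ℝ), ∀ x : Fin k → X, IETuple G x →
      x ∈ closure {t : Fin k → X | EpsAsymTuple G ε t} := by
  intro k hk ε hε x hx
  rw [Metric.mem_closure_iff]
  intro η hη
  obtain ⟨ε', hε', he1, he2⟩ : ∃ e : ℝ, 0 < e ∧ e ≤ ε / 2 ∧ e ≤ η / 3 :=
    ⟨min (ε / 2) (η / 3), by positivity, min_le_left _ _, min_le_right _ _⟩
  obtain ⟨δ, hδ, Fs, hmono, hun, Bs, hmem, hlim⟩ := hmtmp ε' hε'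
  obtain ⟨q, hq, hJ⟩ := hx (fun i => Metric.ball (x i) (η / 3)) (fun i => Metric.isOpen_ball)
    (fun i => Metric.mem_ball_self (by positivity))
  -- finite colouring of the space by sets of diameter at most `δ`
  obtain ⟨t, -, htf, htc⟩ := finite_cover_balls_of_compact (isCompact_univ (X := X))
    (half_pos hδ)
  have hcov : ∀ y : X, ∃ c : t, dist y c < δ / 2 := by
    intro y
    obtain ⟨c, hc, hy⟩ := Set.mem_iUnion₂.1 (htc (Set.mem_univ y))
    exact ⟨⟨c, hc⟩, hy⟩
  choose col hcol using hcov
  have : Fintype t := htf.fintype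
  have : DecidableEq t := Classical.decEq _
  have hcold : ∀ y z, col y = col z → dist y z ≤ δ := by
    intro y z h
    have h1 := hcol y
    have h2 := hcol z
    rw [h] at h1
    have := dist_triangle_right y z (col z : X)
    linarith
  have hM : 1 ≤ Fintype.card t := Fintype.card_pos_iff.2 ⟨col (x ⟨0, by omega⟩)⟩
  have hk1 : (0 : ℝ) < ((k - 1 : ℕ) : ℝ) := by exact_mod_cast (by omega : 0 < k - 1)
  have hL : 0 < Real.log k - Real.log (k - 1 : ℕ) := by
    have := Real.log_lt_log hk1 (by exact_mod_cast (by omega : k - 1 < k) : ((k - 1 : ℕ) : ℝ) < k)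
    linarith
  have hlM : 0 ≤ Real.log (Fintype.card t) := Real.log_natCast_nonneg _
  have hpos : 0 < q * (Real.log k - Real.log (k - 1 : ℕ)) / (Real.log (Fintype.card t) + 1) := by
    positivity
  obtain ⟨N, hN⟩ : ∃ N, (1 : G) ∈ Fs N := by
    have : (1 : G) ∈ ⋃ n, (Fs n : Set G) := hun ▸ Set.mem_univ _
    simpa using this
  obtain ⟨n, hn1, hn2⟩ := ((hlim.eventually (gt_mem_nhds hpos)).and
    (Filter.eventually_ge_atTop N)).exists
  have hFpos : (0 : ℝ) < (Fs n).card := by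
    exact_mod_cast Finset.card_pos.2 ⟨1, hmono hn2 hN⟩
  obtain ⟨J, hJF, hJq, hJi⟩ := hJ (Fs n)
  have hJne : J.Nonempty := by
    rw [← Finset.card_pos]
    have : (0 : ℝ) < J.card := lt_of_lt_of_le (by positivity) hJq
    exact_mod_cast this
  have hpt : ∀ φ : J → Fin k, ∃ y : X, ∀ s : J, dist ((s : G) • y) (x (φ s)) < η / 3 := by
    intro φ
    obtain ⟨y, hy⟩ := hJi J subset_rfl hJne
      (fun g => if h : g ∈ J then φ ⟨g, h⟩ else ⟨0, by omega⟩)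
    refine ⟨y, fun s => ?_⟩
    have := Set.mem_iInter₂.1 hy s s.2
    simpa using this
  choose p hp using hpt
  have hcount := count_aux k (Fintype.card t) J.card (Bs n \ Fs n).card (Fs n).card q hk hM hFpos
    hJq hn1
  obtain ⟨c, hc⟩ := Fintype.exists_lt_card_fiber_of_mul_lt_card
    (f := fun φ : J → Fin k => fun b : ↥(Bs n \ Fs n) => col ((b : G) • p φ))
    (n := (k - 1) ^ J.card) (by simpa using hcount)
  rw [← Fintype.card_coe J] at hc
  obtain ⟨s, hs⟩ := shatter_aux _ hc
  choose φ hφ hφs using hs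
  have hφ' : ∀ i (b : ↥(Bs n \ Fs n)), col ((b : G) • p (φ i)) = c b := by
    intro i b
    exact congrFun (Finset.mem_filter.1 (hφ i)).2 b
  have hz : ∀ i, ∃ z : X, supD (Bs n : Set G) (p (φ i)) z ≤ ε' ∧
      supD (Set.univ \ (Fs n : Set G)) (p (φ ⟨0, by omega⟩)) z ≤ ε' := by
    intro i
    refine (hmem n).2 _ _ (supD_le_aux _ _ _ _ hδ.le fun g hg => hcold _ _ ?_)
    have hg' : g ∈ Bs n \ Fs n := by simpa using hg
    exact (hφ' i ⟨g, hg'⟩).trans (hφ' _ ⟨g, hg'⟩).symm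
  choose z hz1 hz2 using hz
  refine ⟨fun i => (s : G) • z i, ?_, ?_⟩
  · refine ⟨(Fs n).image (fun g => g * (s : G)⁻¹), fun g hg i j => ?_⟩
    have hg' : g * (s : G) ∈ Set.univ \ (Fs n : Set G) := by
      refine ⟨Set.mem_univ _, fun h => hg (Finset.mem_image.2 ⟨_, h, by simp⟩)⟩
    have h1 := le_supD_aux _ _ _ _ (hz2 i) _ hg'
    have h2 := le_supD_aux _ _ _ _ (hz2 j) _ hg'
    have h3 := dist_triangle_left ((g * (s : G)) • z i) ((g * (s : G)) • z j)
      ((g * (s : G)) • p (φ ⟨0, by omega⟩))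
    rw [smul_smul, smul_smul]
    linarith
  · rw [dist_pi_lt_iff hη]
    intro i
    have h1 := hp (φ i) s
    rw [hφs i] at h1
    have h2 := le_supD_aux _ _ _ _ (hz1 i) (s : G) ((hmem n).1 (hJF s.2))
    have h3 := dist_triangle_left (x i) ((s : G) • z i) ((s : G) • p (φ i))
    linarith
end

section
/- Let G be a sofic countably infinite group with sofic approximation sequence Σ. Suppose G ↷ X is expansive and has the topological Markov property. Let k ∈ ℕ and (x₁,…,x_k,x_{k+1}) ∈ X^{k+1} be such that (x₁,…,x_k) is a Σ-IE-tuple and (x_k,x_{k+1}) is an asymptotic pair. Then (x₁,…,x_k,x_{k+1}) is a Σ-IE-tuple. -/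
open Pointwise

/-- `(σ_i : G → Sym(n_i))` is a sofic approximation sequence for `G`. -/
def SoficApprox (G : Type*) [Group G] (n : ℕ → ℕ)
    (σ : ∀ i : ℕ, G → Equiv.Perm (Fin (n i))) : Prop :=
  Filter.Tendsto n Filter.atTop Filter.atTop ∧
  (∀ s t : G, Filter.Tendsto
      (fun i => (((Finset.univ.filter fun v : Fin (n i) =>
          σ i (s * t) v = σ i s (σ i t v)).card : ℝ) / (n i : ℝ)))
      Filter.atTop (nhds 1)) ∧
  (∀ s t : G, s ≠ t → Filter.Tendsto
      (fun i => (((Finset.univ.filter fun v : Fin (n i) =>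
          σ i s v ≠ σ i t v).card : ℝ) / (n i : ℝ)))
      Filter.atTop (nhds 1))

/-- `φ ∈ Map(d,F,δ,σ)`. -/
def InSoficMap {G X : Type*} [SMul G X] [PseudoMetricSpace X]
    (F : Finset G) (δ : ℝ) {n : ℕ} (σ : G → Equiv.Perm (Fin n)) (φ : Fin n → X) : Prop :=
  ∀ s ∈ F, Real.sqrt ((1 / (n : ℝ)) * ∑ v : Fin n, dist (φ (σ s v)) (s • φ v) ^ 2) ≤ δ

/-- `J` is a `(d,F,δ,σ)`-independence set for the tuple `U`. -/
def SoficIndepSet {G X : Type*} [SMul G X] [PseudoMetricSpace X] {m : ℕ}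
    (U : Fin m → Set X) (F : Finset G) (δ : ℝ) {n : ℕ}
    (σ : G → Equiv.Perm (Fin n)) (J : Finset (Fin n)) : Prop :=
  ∀ ω : Fin n → Fin m, ∃ φ : Fin n → X,
    InSoficMap F δ σ φ ∧ ∀ a ∈ J, φ a ∈ U (ω a)

/-- The tuple `U` has positive upper independence density over `Σ = (n, σ)`. -/
def PosUpperIndepDensity {G X : Type*} [SMul G X] [PseudoMetricSpace X] {m : ℕ}
    (U : Fin m → Set X) (n : ℕ → ℕ) (σ : ∀ i : ℕ, G → Equiv.Perm (Fin (n i))) : Prop :=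
  ∃ q > (0 : ℝ), ∀ F : Finset G, ∀ δ > (0 : ℝ),
    {i : ℕ | ∃ J : Finset (Fin (n i)),
      q * (n i : ℝ) ≤ (J.card : ℝ) ∧ SoficIndepSet U F δ (σ i) J}.Infinite

/-- `(x₁,…,x_m)` is a `Σ`-IE-tuple. -/
def SigmaIETuple {G X : Type*} [SMul G X] [PseudoMetricSpace X] {m : ℕ}
    (n : ℕ → ℕ) (σ : ∀ i : ℕ, G → Equiv.Perm (Fin (n i))) (x : Fin m → X) : Prop :=
  ∀ U : Fin m → Set X, (∀ i, IsOpen (U i)) → (∀ i, x i ∈ U i) →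
    PosUpperIndepDensity U n σ


open Classical in
theorem aux_supD_le {G X : Type*} [SMul G X] [MetricSpace X] [CompactSpace X]
    (K : Set G) (x y : X) {δ : ℝ} (hδ : 0 ≤ δ) :
    supD K x y ≤ δ ↔ ∀ g ∈ K, dist (g • x) (g • y) ≤ δ := by
  unfold supD supOf
  constructor
  · intro h g hg
    have hb : BddAbove (Set.range fun g : K => dist ((g : G) • x) ((g : G) • y)) := by
      refine ⟨Metric.diam (Set.univ : Set X), ?_⟩
      rintro _ ⟨g, rfl⟩
      exact Metric.dist_le_diam_of_mem isCompact_univ.isBounded (Set.mem_univ _) (Set.mem_univ _)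
    exact (le_ciSup hb ⟨g, hg⟩).trans h
  · intro h
    exact Real.iSup_le (fun g => h g g.2) hδ

theorem aux_exp_unif {G X : Type*} [Group G] [MetricSpace X] [CompactSpace X] [MulAction G X]
    (hcont : ∀ g : G, Continuous fun x : X => g • x) {c : ℝ}
    (hc : ∀ x y : X, x ≠ y → ∃ g : G, dist (g • x) (g • y) > c) {η : ℝ} (hη : 0 < η) :
    ∃ W : Finset G, ∀ x y : X, (∀ g ∈ W, dist (g • x) (g • y) ≤ c) → dist x y ≤ η := by
  have hK : IsCompact {p : X × X | η ≤ dist p.1 p.2} :=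
    (isClosed_le continuous_const (by fun_prop)).isCompact
  obtain ⟨W, hW⟩ := hK.elim_finite_subcover
    (fun g : G => {p : X × X | c < dist (g • p.1) (g • p.2)})
    (fun g => isOpen_lt continuous_const
      (((hcont g).comp continuous_fst).dist ((hcont g).comp continuous_snd)))
    (by
      rintro ⟨a, b⟩ hp
      have hne : a ≠ b := by
        rintro rfl
        simp at hp
        linarith
      obtain ⟨g, hg⟩ := hc a b hne
      exact Set.mem_iUnion.2 ⟨g, hg⟩)
  refine ⟨W, fun x y h => ?_⟩
  by_contra hlt
  push Not at hlt
  have := hW (show (x, y) ∈ {p : X × X | η ≤ dist p.1 p.2} from hlt.le)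
  simp only [Set.mem_iUnion] at this
  obtain ⟨g, hg, hg2⟩ := this
  exact absurd (h g hg) (not_le.2 hg2)

/-- Uniform gluing from the TMP and expansivity. -/
theorem aux_uniform {G X : Type*} [Group G] [MetricSpace X] [CompactSpace X] [MulAction G X]
    (hcont : ∀ g : G, Continuous fun x : X => g • x) {c : ℝ}
    (hc : ∀ x y : X, x ≠ y → ∃ g : G, dist (g • x) (g • y) > c)
    {ε δ : ℝ} (hε : 0 < ε) (hεc : 3 * ε ≤ c) (hδ : 0 < δ)
    (A B : Finset G) (hAB : IsMemorySet G X ε δ A B) :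
    ∃ E : Finset G, B ⊆ E ∧ ∀ V : Finset G,
      (∀ u ∈ V, ∀ u' ∈ V, u ≠ u' → ∀ e ∈ E, ∀ e' ∈ E, e * u ≠ e' * u') →
      ∀ (b : X) (xt : X),
        (∀ u ∈ V, ∀ h ∈ B, h ∉ A → dist (h • xt) (h • u • b) ≤ δ / 2) →
        ∃ z : X, (∀ u ∈ V, ∀ h ∈ B, dist ((h * u) • z) (h • xt) ≤ 2 * ε) ∧
          (∀ g : G, (∀ u ∈ V, ∀ h ∈ A, g ≠ h * u) → dist (g • z) (g • b) ≤ 2 * ε) := by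
  classical
  obtain ⟨hsub, hmem⟩ := hAB
  have hsub' : ∀ h ∈ A, h ∈ B := fun h hh => hsub hh
  have hmem' : ∀ x y : X, (∀ g ∈ B, g ∉ A → dist (g • x) (g • y) ≤ δ) →
      ∃ z : X, (∀ g ∈ B, dist (g • x) (g • z) ≤ ε) ∧ ∀ g, g ∉ A → dist (g • y) (g • z) ≤ ε := by
    intro x y h
    obtain ⟨z, h1, h2⟩ := hmem x y ((aux_supD_le _ _ _ hδ.le).2 (fun g hg => h g hg.1 hg.2))
    exact ⟨z, fun g hg => (aux_supD_le _ _ _ hε.le).1 h1 g hg,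
      fun g hg => (aux_supD_le _ _ _ hε.le).1 h2 g ⟨Set.mem_univ _, hg⟩⟩
  obtain ⟨W, hW⟩ := aux_exp_unif hcont hc hε
  obtain ⟨W', hW'⟩ := aux_exp_unif hcont hc (half_pos hδ)
  -- the neighbourhoods
  let D : Finset G := A ∪ B ∪ W⁻¹ * A
  let E : Finset G := D ∪ W * D ∪ W' * B
  have hAD : ∀ h ∈ A, h ∈ D := fun h hh => by simp [D, hh]
  have hBD : ∀ h ∈ B, h ∈ D := fun h hh => by simp [D, hh]
  have hWAD : ∀ w ∈ W, ∀ h ∈ A, w⁻¹ * h ∈ D := fun w hw h hh =>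
    Finset.mem_union_right _ (Finset.mul_mem_mul (Finset.inv_mem_inv hw) hh)
  have hDE : ∀ h ∈ D, h ∈ E := fun h hh => by simp [E, hh]
  have hWDE : ∀ w ∈ W, ∀ h ∈ D, w * h ∈ E := fun w hw h hh =>
    Finset.mem_union_left _ (Finset.mem_union_right _ (Finset.mul_mem_mul hw hh))
  have hWBE : ∀ w ∈ W', ∀ h ∈ B, w * h ∈ E := fun w hw h hh =>
    Finset.mem_union_right _ (Finset.mul_mem_mul hw hh)
  clear_value D E
  refine ⟨E, fun h hh => hDE h (hBD h hh), ?_⟩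
  intro V hsep b xt hx
  -- single modifications
  have hw : ∀ u : G, ∃ w : X, u ∈ V → (∀ h ∈ B, dist (h • xt) ((h * u) • w) ≤ ε) ∧
      ∀ g, (∀ h ∈ A, g ≠ h * u) → dist (g • b) (g • w) ≤ ε := by
    intro u
    by_cases hu : u ∈ V
    · obtain ⟨z, h1, h2⟩ := hmem' xt (u • b) (fun g hg hgA => (hx u hu g hg hgA).trans (by linarith))
      refine ⟨u⁻¹ • z, fun _ => ⟨fun h hh => ?_, fun g hg => ?_⟩⟩
      · simpa [mul_smul] using h1 h hh
      · have := h2 (g * u⁻¹) (fun hA => hg _ hA (by simp))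
        simpa [mul_smul] using this
    · exact ⟨b, fun h => absurd h hu⟩
  choose w hw using hw
  suffices H : ∀ S : Finset G, S ⊆ V → ∃ z : X,
      (∀ u ∈ S, ∀ h ∈ D, dist ((h * u) • z) ((h * u) • w u) ≤ ε) ∧
      (∀ g : G, (∀ u ∈ S, ∀ h ∈ D, g ≠ h * u) → dist (g • z) (g • b) ≤ ε) by
    obtain ⟨z, h1, h2⟩ := H V (Finset.Subset.refl _)
    refine ⟨z, fun u hu h hh => ?_, fun g hg => ?_⟩
    · have e1 := h1 u hu h (hBD h hh)
      have e2 := (hw u hu).1 h hh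
      have := dist_triangle_right ((h * u) • z) (h • xt) ((h * u) • w u)
      linarith
    · by_cases hgD : ∀ u ∈ V, ∀ h ∈ D, g ≠ h * u
      · linarith [h2 g hgD]
      · push Not at hgD
        obtain ⟨u, hu, h, hh, rfl⟩ := hgD
        have e1 := h1 u hu h hh
        have e2 := (hw u hu).2 (h * u) (hg u hu)
        have := dist_triangle_right ((h * u) • z) ((h * u) • b) ((h * u) • w u)
        linarith
  intro S
  induction S using Finset.induction_on with
  | empty => exact fun _ => ⟨b, by simp, by simp [hε.le]⟩
  | insert u₀ S hu₀ ih =>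
    intro hSV
    obtain ⟨z, hz1, hz2⟩ := ih (fun u hu => hSV (Finset.mem_insert_of_mem hu))
    have hu₀V : u₀ ∈ V := hSV (Finset.mem_insert_self _ _)
    have hSV' : ∀ u ∈ S, u ∈ V := fun u hu => hSV (Finset.mem_insert_of_mem hu)
    have hne : ∀ u ∈ S, u ≠ u₀ := fun u hu h => hu₀ (h ▸ hu)
    -- crude closeness of z to b off A S
    have hz3 : ∀ g : G, (∀ u ∈ S, ∀ h ∈ A, g ≠ h * u) → dist (g • z) (g • b) ≤ 2 * ε := by
      intro g hg
      by_cases hgD : ∀ u ∈ S, ∀ h ∈ D, g ≠ h * u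
      · linarith [hz2 g hgD]
      · push Not at hgD
        obtain ⟨u, hu, h, hh, rfl⟩ := hgD
        have e1 := hz1 u hu h hh
        have e2 := (hw u (hSV' u hu)).2 (h * u) (hg u hu)
        have := dist_triangle_right ((h * u) • z) ((h * u) • b) ((h * u) • w u)
        linarith
    obtain ⟨z₁, ha, hb⟩ := hmem' xt (u₀ • z) (by
      intro h hh hhA
      have e1 := hx u₀ hu₀V h hh hhA
      have e2 : dist ((h * u₀) • z) ((h * u₀) • b) ≤ δ / 2 := by
        apply hW'
        intro g hg
        rw [← mul_smul, ← mul_smul]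
        have := hz2 (g * (h * u₀)) (fun u hu h' hh' heq =>
          hsep u (hSV' u hu) u₀ hu₀V (hne u hu) h' (hDE _ hh') (g * h) (hWBE g hg h hh)
            (by rw [← heq, mul_assoc]))
        linarith
      rw [mul_smul, mul_smul] at e2
      have := dist_triangle_right (h • xt) (h • u₀ • z) (h • u₀ • b)
      linarith)
    obtain ⟨z', rfl⟩ : ∃ z', z₁ = u₀ • z' := ⟨u₀⁻¹ • z₁, by simp⟩
    have hb' : ∀ g, (∀ h ∈ A, g ≠ h * u₀) → dist (g • z) (g • z') ≤ ε := by
      intro g hg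
      have := hb (g * u₀⁻¹) (fun hA => hg _ hA (by simp))
      simpa [mul_smul] using this
    refine ⟨z', ?_, ?_⟩
    · intro u hu h hh
      apply hW
      intro t ht
      rw [← mul_smul, ← mul_smul]
      have htE := hWDE t ht h hh
      rcases Finset.mem_insert.1 hu with rfl | hu
      · by_cases hg : ∀ k ∈ A, t * (h * u) ≠ k * u
        · have e1 := hb' _ hg
          have e2 := hz2 (t * (h * u)) (fun u' hu' h' hh' heq =>
            hsep u' (hSV' u' hu') u hu₀V (hne u' hu') h' (hDE _ hh') (t * h) htE
              (by rw [← heq, mul_assoc]))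
          have e3 := (hw u hu₀V).2 _ hg
          have t1 := dist_triangle_left ((t * (h * u)) • z') ((t * (h * u)) • w u)
            ((t * (h * u)) • z)
          have t2 := dist_triangle ((t * (h * u)) • z) ((t * (h * u)) • b)
            ((t * (h * u)) • w u)
          linarith
        · push Not at hg
          obtain ⟨k, hk, hkeq⟩ := hg
          rw [hkeq]
          have e1 := ha k (hsub' k hk)
          have e2 := (hw u hu₀V).1 k (hsub' k hk)
          rw [← mul_smul] at e1
          have t1 := dist_triangle_left ((k * u) • z') ((k * u) • w u) (k • xt)
          linarith
      · have huV := hSV' u hu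
        have e1 := hb' (t * (h * u)) (fun k hk heq =>
          hsep u huV u₀ hu₀V (hne u hu) (t * h) htE k (hDE _ (hAD _ hk))
            (by rw [← heq, mul_assoc]))
        have t1 := dist_triangle_left ((t * (h * u)) • z') ((t * (h * u)) • w u)
            ((t * (h * u)) • z)
        by_cases hg : ∃ k ∈ D, t * (h * u) = k * u
        · obtain ⟨k, hk, hkeq⟩ := hg
          have e2 := hz1 u hu k hk
          rw [hkeq] at e1 t1 ⊢
          linarith
        · push Not at hg
          have e2 := hz2 (t * (h * u)) (fun u' hu' h' hh' heq => by
            by_cases huu : u' = u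
            · subst huu
              exact hg h' hh' heq
            · exact hsep u' (hSV' u' hu') u huV huu h' (hDE _ hh') (t * h) htE
                (by rw [← heq, mul_assoc]))
          have e3 := (hw u huV).2 _ (fun k hk => hg k (hAD k hk))
          have t2 := dist_triangle ((t * (h * u)) • z) ((t * (h * u)) • b)
            ((t * (h * u)) • w u)
          linarith
    · intro g hg
      apply hW
      intro t ht
      rw [← mul_smul, ← mul_smul]
      have key : ∀ u ∈ insert u₀ S, ∀ h ∈ A, t * g ≠ h * u := fun u hu h hh heq =>
        hg u hu (t⁻¹ * h) (hWAD t ht h hh) (by rw [mul_assoc, ← heq]; group)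
      have e1 := hb' _ (key u₀ (Finset.mem_insert_self _ _))
      have e2 := hz3 _ (fun u hu => key u (Finset.mem_insert_of_mem hu))
      have t1 := dist_triangle_left ((t * g) • z') ((t * g) • b) ((t * g) • z)
      linarith

/-- Greedy choice of a separated subset. -/
theorem aux_sep {G : Type*} {n : ℕ} (σ : G → Equiv.Perm (Fin n)) (E : Finset G)
    (hE : E.Nonempty) (J : Finset (Fin n)) :
    ∃ J' ⊆ J, (∀ a ∈ J', ∀ a' ∈ J', a ≠ a' → ∀ e ∈ E, ∀ e' ∈ E, σ e a ≠ σ e' a') ∧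
      J.card ≤ (E.card * E.card) * J'.card := by
  classical
  let P : Finset (Fin n) → Prop := fun J' =>
    ∀ a ∈ J', ∀ a' ∈ J', a ≠ a' → ∀ e ∈ E, ∀ e' ∈ E, σ e a ≠ σ e' a'
  obtain ⟨J', hJ', hmax⟩ := Finset.exists_max_image (J.powerset.filter P) Finset.card
    ⟨∅, by simp [P]⟩
  simp only [Finset.mem_filter, Finset.mem_powerset] at hJ' hmax
  refine ⟨J', hJ'.1, hJ'.2, ?_⟩
  have hcov : J ⊆ ((E ×ˢ E) ×ˢ J').image (fun p => (σ p.1.1).symm (σ p.1.2 p.2)) := by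
    intro a ha
    simp only [Finset.mem_image, Finset.mem_product, Prod.exists]
    by_contra hno
    push Not at hno
    have hno' : ∀ e ∈ E, ∀ e' ∈ E, ∀ a' ∈ J', σ e a ≠ σ e' a' := by
      intro e he e' he' a' ha' heq
      exact hno e e' a' ⟨⟨he, he'⟩, ha'⟩ (by rw [← heq]; simp)
    obtain ⟨e₀, he₀⟩ := hE
    have haJ : a ∉ J' := fun h => hno' e₀ he₀ e₀ he₀ a h rfl
    have := hmax (insert a J') ⟨Finset.insert_subset ha hJ'.1, by
      intro b hb b' hb' hne e he e' he'
      rcases Finset.mem_insert.1 hb with h1 | h1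
      · rcases Finset.mem_insert.1 hb' with h2 | h2
        · exact absurd (h1.trans h2.symm) hne
        · rw [h1]
          exact hno' e he e' he' b' h2
      · rcases Finset.mem_insert.1 hb' with h2 | h2
        · rw [h2]
          exact (hno' e' he' e he b h1).symm
        · exact hJ'.2 b h1 b' h2 hne e he e' he'⟩
    rw [Finset.card_insert_of_notMem haJ] at this
    omega
  calc J.card ≤ _ := Finset.card_le_card hcov
    _ ≤ _ := Finset.card_image_le
    _ = _ := by simp [Finset.card_product]

open Classical in
/-- The proportion of vertices failing `P` tends to zero. -/
def AuxNeg (n : ℕ → ℕ) (P : ∀ i, Fin (n i) → Prop) : Prop :=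
  ∀ κ > (0 : ℝ), ∀ᶠ i in Filter.atTop,
    ((Finset.univ.filter fun v : Fin (n i) => ¬ P i v).card : ℝ) ≤ κ * (n i : ℝ)

theorem AuxNeg.and {n : ℕ → ℕ} {P Q : ∀ i, Fin (n i) → Prop} (hP : AuxNeg n P)
    (hQ : AuxNeg n Q) : AuxNeg n (fun i v => P i v ∧ Q i v) := by
  classical
  intro κ hκ
  filter_upwards [hP (κ / 2) (half_pos hκ), hQ (κ / 2) (half_pos hκ)] with i h1 h2
  have : (Finset.univ.filter fun v : Fin (n i) => ¬ (P i v ∧ Q i v)) ⊆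
      (Finset.univ.filter fun v : Fin (n i) => ¬ P i v) ∪
      (Finset.univ.filter fun v : Fin (n i) => ¬ Q i v) := by
    intro v
    simp only [Finset.mem_filter, Finset.mem_union, Finset.mem_univ, true_and]
    tauto
  have h3 : ((Finset.univ.filter fun v : Fin (n i) => ¬ (P i v ∧ Q i v)).card : ℝ) ≤
      ((Finset.univ.filter fun v : Fin (n i) => ¬ P i v).card : ℝ) +
      ((Finset.univ.filter fun v : Fin (n i) => ¬ Q i v).card : ℝ) := by
    exact_mod_cast (Finset.card_le_card this).trans (Finset.card_union_le _ _)
  have h4 : ((Finset.univ.filter fun v : Fin (n i) => ¬ (P i v ∧ Q i v)).card : ℝ) ≤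
      κ * (n i : ℝ) := by
    have h5 : (n i : ℝ) * κ / 2 + (n i : ℝ) * κ / 2 = n i * κ := by ring
    refine (h3.trans (add_le_add ?_ ?_)).trans (le_of_eq (by ring_nf : κ / 2 * (n i : ℝ) + κ / 2 * (n i : ℝ) = κ * n i))
    · convert h1
    · convert h2
  convert h4

theorem AuxNeg.of_true {n : ℕ → ℕ} {P : ∀ i, Fin (n i) → Prop} (h : ∀ i v, P i v) :
    AuxNeg n P := by
  classical
  intro κ hκ
  refine Filter.Eventually.of_forall fun i => ?_
  simp [h]
  positivity

theorem AuxNeg.forall_mem {n : ℕ → ℕ} {G : Type*} {P : G → ∀ i, Fin (n i) → Prop} (S : Finset G)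
    (h : ∀ s ∈ S, AuxNeg n (P s)) : AuxNeg n (fun i v => ∀ s ∈ S, P s i v) := by
  classical
  induction S using Finset.induction_on with
  | empty => exact AuxNeg.of_true (by simp)
  | insert a S ha ih =>
    have := (h a (Finset.mem_insert_self _ _)).and
      (ih fun s hs => h s (Finset.mem_insert_of_mem hs))
    simpa only [Finset.forall_mem_insert] using this

theorem AuxNeg.of_tendsto {n : ℕ → ℕ} (hn : Filter.Tendsto n Filter.atTop Filter.atTop)
    {P : ∀ i, Fin (n i) → Prop} [∀ i, DecidablePred (P i)]
    (h : Filter.Tendsto (fun i => ((Finset.univ.filter fun v : Fin (n i) => P i v).card : ℝ) / (n i : ℝ))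
      Filter.atTop (nhds 1)) : AuxNeg n P := by
  classical
  intro κ hκ
  filter_upwards [h.eventually (lt_mem_nhds (show 1 - κ < 1 by linarith)),
    hn.eventually_ge_atTop 1] with i h1 h2
  have hpos : (0 : ℝ) < n i := by exact_mod_cast h2
  rw [lt_div_iff₀ hpos] at h1
  have h3 := Finset.card_filter_add_card_filter_not (s := (Finset.univ : Finset (Fin (n i)))) (P i)
  rw [Finset.card_univ, Fintype.card_fin] at h3
  have h4 : ((Finset.univ.filter fun v : Fin (n i) => P i v).card : ℝ) +
      ((Finset.univ.filter fun v : Fin (n i) => ¬ P i v).card : ℝ) = n i := by exact_mod_cast h3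
  have h5 : ((Finset.univ.filter fun v : Fin (n i) => ¬ P i v).card : ℝ) ≤ κ * n i := by nlinarith
  convert h5

theorem aux_sofic_good {G : Type*} [Group G] {n : ℕ → ℕ}
    {σ : ∀ i : ℕ, G → Equiv.Perm (Fin (n i))} (h : SoficApprox G n σ) (S : Finset G) :
    AuxNeg n (fun i v => ∀ s ∈ S, ∀ t ∈ S,
      σ i (s * t) v = σ i s (σ i t v) ∧ (s ≠ t → σ i s v ≠ σ i t v)) := by
  refine AuxNeg.forall_mem S fun s _ => AuxNeg.forall_mem S fun t _ => AuxNeg.and ?_ ?_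
  · exact AuxNeg.of_tendsto h.1 (h.2.1 s t)
  · by_cases hst : s = t
    · exact AuxNeg.of_true (by simp [hst])
    · have := AuxNeg.of_tendsto h.1 (h.2.2 s t hst)
      simpa [hst] using this

open Classical in
/-- Chebyshev. -/
theorem aux_cheb {n : ℕ} (f : Fin n → ℝ) {δ δ' : ℝ} (hδ : 0 ≤ δ) (hδ' : 0 < δ')
    (h : Real.sqrt ((1 / (n : ℝ)) * ∑ v : Fin n, f v ^ 2) ≤ δ) :
    ((Finset.univ.filter fun v : Fin n => ¬ f v ≤ δ').card : ℝ) ≤ (δ / δ') ^ 2 * n := by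
  rcases Nat.eq_zero_or_pos n with rfl | hn
  · simp
  have hn' : (0 : ℝ) < n := by exact_mod_cast hn
  have h1 : (1 / (n : ℝ)) * ∑ v : Fin n, f v ^ 2 ≤ δ ^ 2 := (Real.sqrt_le_left hδ).1 h
  have h2 : ∑ v : Fin n, f v ^ 2 ≤ δ ^ 2 * n := by
    rwa [one_div, inv_mul_le_iff₀ hn', mul_comm] at h1
  have h3 : ((Finset.univ.filter fun v : Fin n => ¬ f v ≤ δ').card : ℝ) * δ' ^ 2 ≤
      ∑ v : Fin n, f v ^ 2 := by
    rw [← nsmul_eq_mul]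
    refine (Finset.card_nsmul_le_sum _ (fun v => f v ^ 2) _ ?_).trans
      (Finset.sum_le_sum_of_subset_of_nonneg (Finset.filter_subset _ _) fun _ _ _ => sq_nonneg _)
    intro v hv
    have := (Finset.mem_filter.1 hv).2
    push Not at this
    gcongr
  rw [div_pow, div_mul_eq_mul_div, le_div_iff₀ (by positivity)]
  linarith

theorem aux_unif_cont {G X : Type*} [MetricSpace X] [CompactSpace X] [SMul G X]
    (hcont : ∀ g : G, Continuous fun x : X => g • x) (H : Finset G) {η : ℝ} (hη : 0 < η) :
    ∃ δ > (0 : ℝ), ∀ h ∈ H, ∀ a b : X, dist a b ≤ δ → dist (h • a) (h • b) ≤ η := by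
  classical
  induction H using Finset.induction_on with
  | empty => exact ⟨1, one_pos, by simp⟩
  | insert g H hg ih =>
    obtain ⟨δ₁, h1, h2⟩ := ih
    obtain ⟨δ₂, h3, h4⟩ := Metric.uniformContinuous_iff.1
      (CompactSpace.uniformContinuous_of_continuous (hcont g)) η hη
    refine ⟨min δ₁ (δ₂ / 2), by positivity, ?_⟩
    intro h hh a b hab
    rcases Finset.mem_insert.1 hh with rfl | hh
    · exact (h4 (lt_of_le_of_lt (hab.trans (min_le_right _ _)) (by linarith))).le
    · exact h2 h hh a b (hab.trans (min_le_left _ _))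

open Classical in
theorem aux_avg {G X : Type*} [MetricSpace X] [SMul G X] {n : ℕ} (σ : G → Equiv.Perm (Fin n))
    (φ : Fin n → X) (F : Finset G) {δ M β : ℝ} (hδ : 0 < δ)
    (hM : ∀ a b : X, dist a b ≤ M) (good : Fin n → Prop)
    (hbad : ((Finset.univ.filter fun v : Fin n => ¬ good v).card : ℝ) ≤ β * n)
    (hβ : 2 * β * M ^ 2 ≤ 3 / 4 * δ ^ 2)
    (h : ∀ s ∈ F, ∀ v, good v → good (σ s v) → dist (φ (σ s v)) (s • φ v) ≤ δ / 2) :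
    InSoficMap F δ σ φ := by
  intro s hs
  rcases Nat.eq_zero_or_pos n with rfl | hn
  · simp [hδ.le]
  have hn' : (0 : ℝ) < n := by exact_mod_cast hn
  rw [Real.sqrt_le_left hδ.le, one_div, inv_mul_le_iff₀ hn']
  have key : ∀ v : Fin n, dist (φ (σ s v)) (s • φ v) ^ 2 ≤ (δ / 2) ^ 2 +
      ((if ¬ good v then M ^ 2 else 0) + (if ¬ good (σ s v) then M ^ 2 else 0)) := by
    intro v
    have hM2 : dist (φ (σ s v)) (s • φ v) ^ 2 ≤ M ^ 2 := by
      have := hM (φ (σ s v)) (s • φ v)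
      gcongr
    have hM0 : 0 ≤ M ^ 2 := sq_nonneg _
    have hd0 : 0 ≤ (δ / 2) ^ 2 := sq_nonneg _
    by_cases h1 : good v
    · by_cases h2 : good (σ s v)
      · have := h s hs v h1 h2
        have h3 : dist (φ (σ s v)) (s • φ v) ^ 2 ≤ (δ / 2) ^ 2 := by gcongr
        simpa [h1, h2] using h3
      · rw [if_neg (not_not.2 h1), if_pos h2]
        linarith
    · rw [if_pos h1]
      split_ifs <;> linarith
  have s1 : ∑ v : Fin n, (if ¬ good v then M ^ 2 else 0) =
      ((Finset.univ.filter fun v : Fin n => ¬ good v).card : ℝ) * M ^ 2 := by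
    rw [← Finset.sum_filter, Finset.sum_const, nsmul_eq_mul]
  have s2 : ∑ v : Fin n, (if ¬ good (σ s v) then M ^ 2 else 0) =
      ∑ v : Fin n, (if ¬ good v then M ^ 2 else 0) :=
    Equiv.sum_comp (σ s) (fun v => if ¬ good v then M ^ 2 else 0)
  calc ∑ v : Fin n, dist (φ (σ s v)) (s • φ v) ^ 2 ≤ _ := Finset.sum_le_sum fun v _ => key v
    _ = n * (δ / 2) ^ 2 +
      2 * (((Finset.univ.filter fun v : Fin n => ¬ good v).card : ℝ) * M ^ 2) := by
        rw [Finset.sum_add_distrib, Finset.sum_add_distrib, s2, s1]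
        simp
        ring
    _ ≤ n * (δ / 2) ^ 2 + 2 * (β * n * M ^ 2) := by gcongr
    _ = n * ((δ / 2) ^ 2 + 2 * β * M ^ 2) := by ring
    _ ≤ n * δ ^ 2 := by
        gcongr
        linarith

/-- Let `G` be a sofic countably infinite group with sofic approximation
sequence `Σ`, and let `G ↷ X` be expansive with the TMP.  If `(x₁,…,x_k)` is a `Σ`-IE-tuple
and `(x_k, y)` is an asymptotic pair, then `(x₁,…,x_k,y)` is a `Σ`-IE-tuple. -/
theorem stmt15 (G X : Type*) [Group G] [Countable G] [Infinite G]
    [MetricSpace X] [CompactSpace X] [MulAction G X]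
    (hcont : ∀ g : G, Continuous fun x : X => g • x)
    (n : ℕ → ℕ) (σ : ∀ i : ℕ, G → Equiv.Perm (Fin (n i)))
    (hsofic : SoficApprox G n σ)
    (hexp : Expansive G X) (htmp : TMP G X)
    (k : ℕ) (x : Fin (k + 1) → X) (y : X)
    (hIE : SigmaIETuple n σ x) (hasym : Asymptotic G (x (Fin.last k)) y) :
    SigmaIETuple n σ (Fin.snoc x y) := by
  classical
  obtain ⟨c, hc0, hc⟩ := hexp
  intro U hUo hUx
  -- a common radius
  have hr : ∃ r > (0 : ℝ), ∀ i, Metric.ball ((Fin.snoc x y : Fin (k + 2) → X) i) r ⊆ U i := by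
    have : ∀ i, ∃ r > (0 : ℝ), Metric.ball ((Fin.snoc x y : Fin (k + 2) → X) i) r ⊆ U i :=
      fun i => Metric.isOpen_iff.1 (hUo i) _ (hUx i)
    choose ρ hρ0 hρ using this
    refine ⟨Finset.univ.inf' Finset.univ_nonempty ρ, ?_, fun i => ?_⟩
    · simpa [Finset.lt_inf'_iff] using hρ0
    · exact (Metric.ball_subset_ball (Finset.inf'_le _ (Finset.mem_univ i))).trans (hρ i)
  obtain ⟨r, hr0, hr⟩ := hr
  obtain ⟨ε, hε, hεc, hεr⟩ : ∃ ε > (0 : ℝ), 5 * ε ≤ c ∧ 2 * ε < r / 2 := by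
    refine ⟨min (c / 5) (r / 5), by positivity, ?_, ?_⟩
    · linarith [min_le_left (c / 5) (r / 5)]
    · linarith [min_le_right (c / 5) (r / 5)]
  obtain ⟨δ, hδ, htmp⟩ := htmp ε hε
  obtain ⟨A₀, hA₀⟩ := hasym (δ / 6) (by positivity)
  obtain ⟨A, hA1, hA⟩ : ∃ A : Finset G, 1 ∈ A ∧
      ∀ g ∉ A, dist (g • x (Fin.last k)) (g • y) ≤ δ / 6 :=
    ⟨insert 1 A₀, Finset.mem_insert_self _ _,
      fun g hg => hA₀ g fun h => hg (Finset.mem_insert_of_mem h)⟩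
  obtain ⟨B, hB⟩ := htmp A
  have hAB : ∀ h ∈ A, h ∈ B := fun h hh => hB.1 hh
  obtain ⟨E, hBE, hglue⟩ := aux_uniform hcont hc hε (by linarith) hδ A B hB
  have hE1 : (1 : G) ∈ E := hBE (hAB _ hA1)
  -- the smaller neighbourhoods
  obtain ⟨q, hq, hind⟩ := hIE
    (fun i => Metric.ball (x i) (r / 2) ∩ ⋂ h ∈ B, {z | dist (h • z) (h • x i) < δ / 6})
    (fun i => Metric.isOpen_ball.inter (isOpen_biInter_finset fun h _ =>
      isOpen_lt ((hcont h).dist continuous_const) continuous_const))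
    (fun i => ⟨Metric.mem_ball_self (by positivity), by
      simp only [Set.mem_iInter, Set.mem_setOf_eq, dist_self]
      intro _ _
      positivity⟩)
  have hEc : (0 : ℝ) < (E.card : ℝ) * E.card := by
    have : 0 < E.card := Finset.card_pos.2 ⟨1, hE1⟩
    positivity
  refine ⟨q / (E.card * E.card), by positivity, ?_⟩
  intro F δ₀ hδ₀
  obtain ⟨W, hW⟩ := aux_exp_unif hcont hc (half_pos hδ₀)
  obtain ⟨δ₂, hδ₂, huc⟩ := aux_unif_cont hcont (W ∪ B) (η := min ε (δ / 6)) (by positivity)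
  let Q : Finset G := A⁻¹ * W
  let T : Finset G := {1} ∪ Q ∪ Q * F
  let S : Finset G := F ∪ T ∪ E
  have hT1 : (1 : G) ∈ T := by simp [T]
  have hQ : ∀ h ∈ A, ∀ g ∈ W, h⁻¹ * g ∈ Q := fun h hh g hg =>
    Finset.mul_mem_mul (Finset.inv_mem_inv hh) hg
  have hQT : ∀ g ∈ Q, g ∈ T := fun g hg => by simp [T, hg]
  have hQFT : ∀ g ∈ Q, ∀ s ∈ F, g * s ∈ T := fun g hg s hs =>
    Finset.mem_union_right _ (Finset.mul_mem_mul hg hs)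
  have hFS : ∀ g ∈ F, g ∈ S := fun g hg => by simp [S, hg]
  have hTS : ∀ g ∈ T, g ∈ S := fun g hg => by simp [S, hg]
  have hES : ∀ g ∈ E, g ∈ S := fun g hg => by simp [S, hg]
  clear_value Q T S
  obtain ⟨M, hM0, hM⟩ : ∃ M > (0 : ℝ), ∀ a b : X, dist a b ≤ M :=
    ⟨Metric.diam (Set.univ : Set X) + 1, by positivity, fun a b =>
      (Metric.dist_le_diam_of_mem isCompact_univ.isBounded (Set.mem_univ a)
        (Set.mem_univ b)).trans (by linarith)⟩
  obtain ⟨β, hβ0, hβ⟩ : ∃ β > (0 : ℝ), 2 * β * M ^ 2 ≤ 3 / 4 * δ₀ ^ 2 := by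
    refine ⟨3 / 8 * δ₀ ^ 2 / M ^ 2, by positivity, le_of_eq ?_⟩
    field_simp
    ring
  obtain ⟨δ₁, hδ₁, hδβ⟩ : ∃ δ₁ > (0 : ℝ), (S.card : ℝ) * (δ₁ / δ₂) ^ 2 ≤ β / 2 := by
    refine ⟨δ₂ * Real.sqrt (β / 2 / (S.card + 1)), by positivity, ?_⟩
    rw [mul_div_cancel_left₀ _ hδ₂.ne', Real.sq_sqrt (by positivity), mul_div_assoc',
      div_le_iff₀ (by positivity)]
    nlinarith
  have hsg := aux_sofic_good hsofic S (β / 2) (half_pos hβ0)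
  obtain ⟨N, hN⟩ := Filter.eventually_atTop.1 hsg
  have hinf := hind S δ₁ hδ₁
  refine (hinf.diff (Set.finite_lt_nat N)).mono ?_
  rintro i ⟨⟨J, hJq, hJ⟩, hiN⟩
  have hiN' : N ≤ i := not_lt.1 hiN
  have hbad1 := hN i hiN'
  clear hN hinf hsg hind
  obtain ⟨J', hJJ, hsep, hcard⟩ := aux_sep (σ i) E ⟨1, hE1⟩ J
  refine ⟨J', ?_, ?_⟩
  · rw [div_mul_eq_mul_div, div_le_iff₀ hEc]
    have : (J.card : ℝ) ≤ (E.card * E.card) * J'.card := by exact_mod_cast hcard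
    linarith
  intro ω
  let ω' : Fin (n i) → Fin (k + 1) := fun a =>
    if h : ω a = Fin.last (k + 1) then Fin.last k else (ω a).castPred h
  obtain ⟨φ, hφ, hφU⟩ := hJ ω'
  let J₁ : Finset (Fin (n i)) := J'.filter fun a => ω a = Fin.last (k + 1)
  have hJ₁ : ∀ a, a ∈ J₁ ↔ a ∈ J' ∧ ω a = Fin.last (k + 1) := fun a => Finset.mem_filter
  let sg : Fin (n i) → Prop := fun v => ∀ s ∈ S, ∀ t ∈ S,
      σ i (s * t) v = σ i s (σ i t v) ∧ (s ≠ t → σ i s v ≠ σ i t v)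
  let good : Fin (n i) → Prop := fun v => sg v ∧
    ∀ s ∈ S, dist (φ (σ i s v)) (s • φ v) ≤ δ₂
  have hbad : ((Finset.univ.filter fun v : Fin (n i) => ¬ good v).card : ℝ) ≤ β * n i := by
    have hsub : (Finset.univ.filter fun v : Fin (n i) => ¬ good v) ⊆
        (Finset.univ.filter fun v : Fin (n i) => ¬ sg v) ∪
        S.biUnion fun s => Finset.univ.filter fun v : Fin (n i) =>
          ¬ dist (φ (σ i s v)) (s • φ v) ≤ δ₂ := by
      intro v
      simp only [Finset.mem_filter, Finset.mem_union, Finset.mem_univ, true_and,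
        Finset.mem_biUnion, good, not_and_or]
      push Not
      exact id
    have h1 : ((Finset.univ.filter fun v : Fin (n i) => ¬ good v).card : ℝ) ≤
        ((Finset.univ.filter fun v : Fin (n i) => ¬ sg v).card : ℝ) +
        ∑ s ∈ S, ((Finset.univ.filter fun v : Fin (n i) =>
          ¬ dist (φ (σ i s v)) (s • φ v) ≤ δ₂).card : ℝ) := by
      exact_mod_cast (Finset.card_le_card hsub).trans ((Finset.card_union_le _ _).trans
        (Nat.add_le_add_left Finset.card_biUnion_le _))
    have h2 : ∑ s ∈ S, ((Finset.univ.filter fun v : Fin (n i) =>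
          ¬ dist (φ (σ i s v)) (s • φ v) ≤ δ₂).card : ℝ) ≤
          ∑ s ∈ S, (δ₁ / δ₂) ^ 2 * (n i : ℝ) := by
      refine Finset.sum_le_sum fun s hs => ?_
      have := aux_cheb (fun v => dist (φ (σ i s v)) (s • φ v)) hδ₁.le hδ₂ (hφ s hs)
      convert this
    rw [Finset.sum_const, nsmul_eq_mul] at h2
    have h3 : (S.card : ℝ) * ((δ₁ / δ₂) ^ 2 * (n i : ℝ)) ≤ β / 2 * n i := by
      rw [← mul_assoc]
      gcongr
    have h4 : ((Finset.univ.filter fun v : Fin (n i) => ¬ sg v).card : ℝ) ≤ β / 2 * n i := by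
      convert hbad1
    linarith
  -- the visited set
  let V : Fin (n i) → Finset G := fun v => T.filter fun u => σ i u v ∈ J₁
  have hV : ∀ v u, u ∈ V v ↔ u ∈ T ∧ σ i u v ∈ J₁ := fun v u => Finset.mem_filter
  clear_value V J₁
  have hone : ∀ v, good v → σ i 1 v = v := by
    intro v hv
    have := (hv.1 1 (hES _ hE1) 1 (hES _ hE1)).1
    rw [mul_one] at this
    exact ((σ i 1).injective this).symm
  have hex : ∀ v, ∃ z : X,
      (good v → (∀ u ∈ V v, ∀ h ∈ B, dist ((h * u) • z) (h • y) ≤ 2 * ε) ∧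
        (∀ g : G, (∀ u ∈ V v, ∀ h ∈ A, g ≠ h * u) → dist (g • z) (g • φ v) ≤ 2 * ε)) ∧
      (¬ good v → z = (Fin.snoc x y : Fin (k + 2) → X) (ω v)) := by
    intro v
    by_cases hv : good v
    swap
    · exact ⟨_, fun h => absurd h hv, fun _ => rfl⟩
    obtain ⟨z, hz⟩ := hglue (V v) (by
      intro u hu u' hu' hne e he e' he' heq
      rw [hV] at hu hu'
      have hne' := (hv.1 u (hTS u hu.1) u' (hTS u' hu'.1)).2 hne
      refine hsep _ ((hJ₁ _).1 hu.2).1 _ ((hJ₁ _).1 hu'.2).1 hne' e he e' he' ?_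
      rw [← (hv.1 e (hES e he) u (hTS u hu.1)).1, ← (hv.1 e' (hES e' he') u' (hTS u' hu'.1)).1, heq])
      (φ v) y (by
      intro u hu h hh hhA
      rw [hV] at hu
      obtain ⟨huJ, huω⟩ := (hJ₁ _).1 hu.2
      have e1 := hA h hhA
      have e2 := (hφU _ (hJJ huJ)).2
      have hω' : ω' (σ i u v) = Fin.last k := by simp only [ω', huω, dif_pos]
      rw [hω'] at e2
      simp only [Set.mem_iInter, Set.mem_setOf_eq] at e2
      have e2 := e2 h hh
      have e3 := (huc h (Finset.mem_union_right _ hh) _ _ (hv.2 u (hTS u hu.1))).trans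
        (min_le_right _ _)
      have t1 := dist_triangle_left (h • y) (h • u • φ v) (h • x (Fin.last k))
      have t2 := dist_triangle_left (h • x (Fin.last k)) (h • u • φ v) (h • φ (σ i u v))
      linarith)
    exact ⟨z, fun _ => hz, fun h => absurd hv h⟩
  choose ψ hψg hψb using hex
  refine ⟨ψ, aux_avg (σ i) ψ F hδ₀ hM good (by convert hbad) hβ ?_, ?_⟩
  · intro s hs v hv hv'
    apply hW
    intro g hg
    by_cases hcase : ∃ u ∈ V (σ i s v), ∃ h ∈ A, g = h * u
    · obtain ⟨u, hu, h, hh, rfl⟩ := hcase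
      have e1 := (hψg _ hv').1 u hu h (hAB h hh)
      rw [hV] at hu
      have huQ : u ∈ Q := by simpa using hQ h hh _ hg
      have hus : u * s ∈ V v := by
        rw [hV, (hv.1 u (hTS u hu.1) s (hFS s hs)).1]
        exact ⟨hQFT u huQ s hs, hu.2⟩
      have e2 := (hψg _ hv).1 (u * s) hus h (hAB h hh)
      rw [← mul_smul, mul_assoc h u s]
      have := dist_triangle_right ((h * u) • ψ (σ i s v)) ((h * (u * s)) • ψ v) (h • y)
      linarith
    · push Not at hcase
      have e1 := (hψg _ hv').2 g hcase
      have e2 := (hψg _ hv).2 (g * s) (by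
        intro u hu h hh heq
        rw [hV] at hu
        have hq : h⁻¹ * g ∈ Q := hQ h hh g hg
        have hu' : u = h⁻¹ * g * s := by rw [mul_assoc, heq]; group
        refine hcase (h⁻¹ * g) ?_ h hh (by group)
        rw [hV, ← (hv.1 _ (hTS _ (hQT _ hq)) s (hFS s hs)).1, ← hu']
        exact ⟨hQT _ hq, hu.2⟩)
      have e3 := (huc g (Finset.mem_union_left _ hg) _ _ (hv.2 s (hFS s hs))).trans
        (min_le_left _ _)
      rw [mul_smul, mul_smul] at e2
      have t1 := dist_triangle (g • ψ (σ i s v)) (g • φ (σ i s v)) (g • s • ψ v)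
      have t2 := dist_triangle_right (g • φ (σ i s v)) (g • s • ψ v) (g • s • φ v)
      linarith
  · intro a ha
    apply hr
    by_cases hgood : good a
    swap
    · rw [hψb a hgood]
      exact Metric.mem_ball_self hr0
    have h1a := hone a hgood
    by_cases hω : ω a = Fin.last (k + 1)
    · have hmem : (1 : G) ∈ V a := by
        rw [hV, h1a, hJ₁]
        exact ⟨hT1, ha, hω⟩
      have e1 := (hψg a hgood).1 1 hmem 1 (hAB _ hA1)
      simp only [mul_one, one_smul] at e1
      rw [hω, Fin.snoc_last, Metric.mem_ball]
      linarith
    · have e1 := (hψg a hgood).2 1 (by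
        intro u hu h hh heq
        rw [hV, hJ₁] at hu
        have hne : a ≠ σ i u a := fun h => hω (by rw [h]; exact hu.2.2)
        refine hsep a ha _ hu.2.1 hne 1 hE1 h (hBE (hAB h hh)) ?_
        rw [← (hgood.1 h (hES _ (hBE (hAB h hh))) u (hTS u hu.1)).1, heq])
      have e2 := (hφU a (hJJ ha)).1
      have hω' : ω' a = (ω a).castPred hω := by simp only [ω', hω, dif_neg, not_false_eq_true]
      rw [hω', Metric.mem_ball] at e2
      have hsn : (Fin.snoc x y : Fin (k + 2) → X) (ω a) = x ((ω a).castPred hω) := by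
        conv_lhs => rw [← Fin.castSucc_castPred (ω a) hω]
        exact Fin.snoc_castSucc (α := fun _ => X) _ _ _
      rw [hsn, Metric.mem_ball]
      simp only [one_smul] at e1
      have := dist_triangle (ψ a) (φ a) (x ((ω a).castPred hω))
      linarith
end

section
/- Let F₂ be the free group on two generators a,b and let X_pm ⊆ {a,b,a⁻¹,b⁻¹}^{F₂} be the perfect matchings subshift, consisting of all x such that (x(g))⁻¹ = x(g·x(g)) for every g ∈ F₂. Then the shift action F₂ ↷ X_pm has no off-diagonal asymptotic pairs. -/
/-- The alphabet `{a, b, a⁻¹, b⁻¹}` inside the free group `F₂` on two generators. -/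
def pmAlphabet : Set (FreeGroup (Fin 2)) :=
  {FreeGroup.of 0, FreeGroup.of 1, (FreeGroup.of 0)⁻¹, (FreeGroup.of 1)⁻¹}

/-- The perfect matchings subshift `X_pm ⊆ {a,b,a⁻¹,b⁻¹}^{F₂}`: configurations `x` with
`(x g)⁻¹ = x (g * x g)` for all `g ∈ F₂`. -/
def Xpm : Set (FreeGroup (Fin 2) → FreeGroup (Fin 2)) :=
  {x | (∀ g, x g ∈ pmAlphabet) ∧ ∀ g, (x g)⁻¹ = x (g * x g)}

theorem pm_letter {s : FreeGroup (Fin 2)} (h : s ∈ pmAlphabet) :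
    ∃ l : Fin 2 × Bool, s = FreeGroup.mk [l] := by
  rcases h with h | h | h | h
  · exact ⟨(0, true), h⟩
  · exact ⟨(1, true), h⟩
  · exact ⟨(0, false), h⟩
  · exact ⟨(1, false), h⟩

theorem pm_last (g : FreeGroup (Fin 2)) (l : Fin 2 × Bool)
    (h : (g * FreeGroup.mk [l]).norm ≤ g.norm) :
    (l.1, !l.2) ∈ g.toWord.getLast? := by
  by_contra hc
  have hr : FreeGroup.IsReduced (g.toWord ++ [l]) := by
    have hg : FreeGroup.IsReduced g.toWord := FreeGroup.isReduced_toWord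
    unfold FreeGroup.IsReduced at *
    rw [List.isChain_append]
    refine ⟨hg, by simp, ?_⟩
    intro p hp q hq hpq
    simp at hq
    subst hq
    by_contra hne
    apply hc
    have : p = (l.1, !l.2) := by
      ext1
      · exact hpq
      · revert hne
        cases p.2 <;> cases l.2 <;> simp
    rwa [← this]
  have he : g * FreeGroup.mk [l] = FreeGroup.mk (g.toWord ++ [l]) := by
    rw [← FreeGroup.mul_mk, FreeGroup.mk_toWord]
  have hw : (g * FreeGroup.mk [l]).toWord = g.toWord ++ [l] := by
    rw [he, FreeGroup.toWord_mk, hr.reduce_eq]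
  unfold FreeGroup.norm at h
  rw [hw] at h
  simp at h

theorem pm_move {x y : FreeGroup (Fin 2) → FreeGroup (Fin 2)}
    (hx : x ∈ Xpm) (hy : y ∈ Xpm) {g : FreeGroup (Fin 2)} (hg : x g ≠ y g) :
    x (g * x g) ≠ y (g * x g) := by
  intro h
  have h1 := hx.2 g
  have h2 := hy.2 (g * x g)
  rw [← h, ← h1] at h2
  simp at h2
  exact hg h2

/-- The shift action `F₂ ↷ X_pm` on the perfect matchings subshift has no
off-diagonal asymptotic pairs: if `x, y ∈ X_pm` agree outside a finite subset of `F₂` (which,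
for subshifts, is equivalent to being an asymptotic pair), then `x = y`. -/
theorem stmt17 (x y : FreeGroup (Fin 2) → FreeGroup (Fin 2))
    (hx : x ∈ Xpm) (hy : y ∈ Xpm)
    (hasym : {g : FreeGroup (Fin 2) | x g ≠ y g}.Finite) :
    x = y := by
  by_contra hne
  obtain ⟨g0, hg0⟩ := Function.ne_iff.mp hne
  obtain ⟨g, hg, hmax⟩ := Set.exists_max_image _ FreeGroup.norm hasym ⟨g0, hg0⟩
  have hg' : x g ≠ y g := hg
  have h1 := hmax _ (pm_move hx hy hg')
  have h2 := hmax _ (pm_move hy hx hg'.symm).symm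
  obtain ⟨l, hl⟩ := pm_letter (hx.1 g)
  obtain ⟨m, hm⟩ := pm_letter (hy.1 g)
  rw [hl] at h1
  rw [hm] at h2
  have e := Option.mem_unique (pm_last g l h1) (pm_last g m h2)
  apply hg'
  rw [hl, hm]
  have : l = m := by
    simp at e
    exact Prod.ext e.1 e.2
  rw [this]
end

section
/- Let F₂ be the free group on generators a,b, let B₁ = {e, a, b, a⁻¹, b⁻¹}, and let X_✚ = {x ∈ (ℤ/2ℤ)^{F₂} : Σ_{s∈B₁} x(gs) = 0 for every g ∈ F₂} be the 5-dot shift. Then the shift action F₂ ↷ X_✚ has no off-diagonal asymptotic pairs. -/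
/-- The 5-dot shift `X_✚ ⊆ (ℤ/2ℤ)^{F₂}`: configurations `x` with
`Σ_{s ∈ {e,a,b,a⁻¹,b⁻¹}} x (g s) = 0` for every `g ∈ F₂`. -/
def Xcross : Set (FreeGroup (Fin 2) → ZMod 2) :=
  {x | ∀ g : FreeGroup (Fin 2),
    x g + x (g * FreeGroup.of 0) + x (g * FreeGroup.of 1)
      + x (g * (FreeGroup.of 0)⁻¹) + x (g * (FreeGroup.of 1)⁻¹) = 0}

theorem toWord_ext_last (g : FreeGroup (Fin 2)) (p : Fin 2 × Bool)
    (h : ∀ q ∈ g.toWord.getLast?, q.1 = p.1 → q.2 = p.2) :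
    (g * FreeGroup.mk [p]).toWord = g.toWord ++ [p] := by
  have hr : FreeGroup.IsReduced (g.toWord ++ [p]) := by
    unfold FreeGroup.IsReduced
    rw [List.isChain_append]
    refine ⟨FreeGroup.isReduced_toWord, by simp, ?_⟩
    intro q hq r hr
    simp at hr
    subst hr
    exact h q hq
  conv_lhs => rw [← FreeGroup.mk_toWord (x := g)]
  rw [FreeGroup.mul_mk, FreeGroup.toWord_mk]
  exact hr.reduce_eq

theorem finite_support_zero (z : FreeGroup (Fin 2) → ZMod 2)
    (hz : ∀ g : FreeGroup (Fin 2), z g + z (g * FreeGroup.mk [(0, true)])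
      + z (g * FreeGroup.mk [(1, true)]) + z (g * FreeGroup.mk [(0, false)])
      + z (g * FreeGroup.mk [(1, false)]) = 0)
    (hfin : {g | z g ≠ 0}.Finite) (g₀ : FreeGroup (Fin 2)) : z g₀ = 0 := by
  by_contra hg₀
  obtain ⟨g, hg, hmax⟩ := Set.exists_max_image _ (fun g => g.toWord.length) hfin ⟨g₀, hg₀⟩
  have hzero : ∀ h : FreeGroup (Fin 2), g.toWord.length < h.toWord.length → z h = 0 := by
    intro h hl
    by_contra hne
    exact absurd (hmax h hne) (not_le.mpr hl)
  obtain ⟨p, hp⟩ : ∃ p : Fin 2 × Bool,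
      ∀ q ∈ g.toWord.getLast?, q.1 = p.1 → q.2 = p.2 := by
    cases hL : g.toWord.getLast? with
    | none => exact ⟨(0, true), by simp⟩
    | some q => exact ⟨q, by simp⟩
  have h1 := toWord_ext_last g p hp
  have hs : z (g * FreeGroup.mk [p]) = 0 := hzero _ (by rw [h1]; simp)
  have h2 : ∀ r : Fin 2 × Bool, (p.1 = r.1 → p.2 = r.2) →
      z (g * FreeGroup.mk [p] * FreeGroup.mk [r]) = 0 := by
    intro r hr
    apply hzero
    rw [toWord_ext_last _ r, h1]
    · simp
    · rw [h1]
      simpa using hr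
  have h3 : z (g * FreeGroup.mk [p] * FreeGroup.mk [(p.1, !p.2)]) = z g := by
    congr 1
    have : FreeGroup.mk [(p.1, !p.2)] = (FreeGroup.mk [p])⁻¹ := by
      simp [FreeGroup.inv_mk, FreeGroup.invRev]
    rw [this, mul_inv_cancel_right]
  have h4 := hz (g * FreeGroup.mk [p])
  apply hg
  obtain ⟨i, b⟩ := p
  have e1 := h2 (0, true)
  have e2 := h2 (1, true)
  have e3 := h2 (0, false)
  have e4 := h2 (1, false)
  rw [hs] at h4
  fin_cases i <;> cases b <;> simp at e1 e2 e3 e4 h3 h4 <;>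
    simp_all

/-- The shift action `F₂ ↷ X_✚` on the 5-dot shift has no off-diagonal
asymptotic pairs: if `x, y ∈ X_✚` agree outside a finite subset of `F₂` (which, for
subshifts, is equivalent to being an asymptotic pair), then `x = y`. -/
theorem stmt18 (x y : FreeGroup (Fin 2) → ZMod 2)
    (hx : x ∈ Xcross) (hy : y ∈ Xcross)
    (hasym : {g : FreeGroup (Fin 2) | x g ≠ y g}.Finite) :
    x = y := by
  funext g
  refine sub_eq_zero.mp (finite_support_zero (fun g => x g - y g) ?_ ?_ g)
  · intro h
    have h1 := hx h
    have h2 := hy h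
    have e (i : Fin 2) : (FreeGroup.of i)⁻¹ = FreeGroup.mk [(i, false)] := rfl
    have e' (i : Fin 2) : FreeGroup.of i = FreeGroup.mk [(i, true)] := rfl
    rw [e, e, e', e'] at h1 h2
    linear_combination h1 - h2
  · simpa [sub_eq_zero] using hasym
end
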